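/- There exist three distinct primes p₁, p₂, and r such that for every integer i ≥ 1 there exists a finite solvable group G_i whose order is divisible by no primes other than p₁, p₂, and r, such that 1 is the only prime power among the degrees of the irreducible complex characters of G_i, and the Fitting height of G_i equals i + 1. -/

import Mathlib

/-!
The primes are `3`, `5` and `2`. Starting from the cyclic group of order `3`, groups are built by
alternating between `3` and `5`. Given `G` with a nontrivial normal `p`-subgroup `V`, let `s` be
the other odd prime and let `N` be the elementary abelian `s`-group of functions `G → ℤ/s` with
zero sum over each coset of `V`. The next group is `N ⋊ (G × C₂)`, with `G` acting by translation
and `C₂` by inversion, and `N` plays the role of `V` in it.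

*Degrees.* Neither `V` nor `C₂` fixes a nontrivial element of `N`. If an irreducible
representation of dimension `d` is nontrivial on `N`, then `N` has no nonzero fixed vector in it,
so the traces of the elements of `N` sum to `0`. Grouping this sum by the orbits of a `q`-group
acting on `N` without nontrivial fixed points gives `0 = d + q r` with `r` an algebraic integer, so
`q ∣ d` (`prime_dvd_finrank`). With `q = p` and `q = 2`, the degree `d` is not a prime power. The
other irreducible representations come from `G × C₂`, and restrict irreducibly to `G`.

*Fitting height.* Since `p ≠ s`, the sum over `v ∈ V` of `f - v f` is `|V| f`, an invertible
multiple of `f`; hence `[N, V] = N`. The successive modules therefore form a chain in which each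
term is its own commutator with the previous one, and no Fitting series can be shorter than such a
chain (`le_length_of_chain`). Conversely each step lengthens a Fitting series by only one, as `N` is
abelian and `C₂` is central modulo `N` (`isFittingSeries_extend`).
-/

/-- The set of degrees of the irreducible complex characters of `G`. -/
def charDegrees (G : Type) [Group G] : Set ℕ :=
  {d | ∃ V : FDRep ℂ G, CategoryTheory.Simple V ∧ Module.finrank ℂ V = d}

/-- `G` is a *composite degree group* (CDG): `1` is the only prime power among the degrees of
the irreducible complex characters of `G`. -/
def IsCDG (G : Type) [Group G] : Prop :=
  ∀ d ∈ charDegrees G, IsPrimePow d → d = 1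

/-- The quotient `B/A` (for normal subgroups `A ≤ B` of `G`) is a nilpotent group. -/
def IsNilpotentQuot {G : Type*} [Group G] (A B : Subgroup G) [A.Normal] : Prop :=
  Group.IsNilpotent (↥(B.map (QuotientGroup.mk' A)))

/-- `F` is a normal series `⊥ = F 0 ≤ F 1 ≤ ⋯ ≤ F n = ⊤` of normal subgroups of `G`
with every quotient `F (i+1) / F i` nilpotent. -/
def IsFittingSeries {G : Type*} [Group G] (F : ℕ → Subgroup G) (n : ℕ) : Prop :=
  F 0 = ⊥ ∧ F n = ⊤ ∧ (∀ i, (F i).Normal) ∧ (∀ i, i < n → F i ≤ F (i + 1)) ∧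
    ∀ i, i < n → ∀ hi : (F i).Normal, @IsNilpotentQuot G _ (F i) (F (i + 1)) hi

/-- The Fitting height of `G` equals `n`: `n` is the length of a shortest normal series of `G`
with nilpotent quotients. -/
def FittingHeightIs (G : Type*) [Group G] (n : ℕ) : Prop :=
  (∃ F : ℕ → Subgroup G, IsFittingSeries F n) ∧
    ∀ m : ℕ, (∃ F : ℕ → Subgroup G, IsFittingSeries F m) → n ≤ m

/-! ### Degrees of irreducible representations -/

/-- Irreducibility of a complex representation, as a condition on invariant subspaces: the space is
nonzero and has no invariant subspace besides `⊥` and `⊤`. -/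
def IsIrr {G : Type} [Group G] {W : Type} [AddCommGroup W] [Module ℂ W]
    (ρ : Representation ℂ G W) : Prop :=
  Nontrivial W ∧ ∀ U : Submodule ℂ W, (∀ g, ∀ x ∈ U, ρ g x ∈ U) → U = ⊥ ∨ U = ⊤

open CategoryTheory in
theorem isIrr_of_simple {G : Type} [Group G] (V : FDRep ℂ G) [Simple V] : IsIrr V.ρ := by
  constructor
  · by_contra h
    rw [not_nontrivial_iff_subsingleton] at h
    apply id_nonzero V
    ext x
    exact Subsingleton.elim (α := V) _ _
  · intro U hU
    let σ : Representation ℂ G U := Subrepresentation.toRepresentation ⟨U, fun g v hv => hU g v hv⟩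
    let f : FDRep.of σ ⟶ V := 
      { hom := FGModuleCat.ofHom U.subtype
        comm := fun g => by
          ext x
          rfl }
    have hm : Mono f := by
      apply (Action.forget (FGModuleCat ℂ) G).mono_of_mono_map
      apply (forget₂ (FGModuleCat ℂ) (ModuleCat ℂ)).mono_of_mono_map
      rw [ModuleCat.mono_iff_injective]
      exact U.injective_subtype
    by_cases hf : f = 0
    · left
      rw [eq_bot_iff]
      intro x hx
      have : f.hom.hom.hom (⟨x, hx⟩ : U) = 0 := by rw [hf]; rfl
      exact this
    · right
      have := isIso_of_mono_of_nonzero hf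
      rw [eq_top_iff]
      intro x _
      have h2 : x = f.hom.hom.hom ((inv f).hom.hom.hom x) := by
        have : inv f ≫ f = 𝟙 V := by simp
        have h3 := congrArg (fun k : V ⟶ V => k.hom.hom.hom x) this
        exact h3.symm
      rw [h2]
      exact Subtype.property (p := fun x => x ∈ U) ((inv f).hom.hom.hom x)

/-- No irreducible finite-dimensional complex representation of `G` has prime power dimension.
This is `IsCDG` for unbundled representations. -/
def NoPrimePowDegree (G : Type) [Group G] : Prop :=
  ∀ (W : Type) [AddCommGroup W] [Module ℂ W] [FiniteDimensional ℂ W]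
    (ρ : Representation ℂ G W), IsIrr ρ → ¬ IsPrimePow (Module.finrank ℂ W)

/-- An orbit-counting congruence over the ring of algebraic integers: if a `q`-group acts on `X`, a
function with algebraic integer values that is constant on orbits and zero on fixed points has sum
divisible by `q`, since every other orbit has size divisible by `q`. -/
theorem exists_sum_eq_mul_of_isPGroup {q : ℕ} [Fact q.Prime] {Q X : Type} [Group Q] [Fintype X]
    [MulAction Q X] (hQ : IsPGroup q Q) (f : X → ℂ) (hf : ∀ (g : Q) x, f (g • x) = f x)
    (hi : ∀ x, IsIntegral ℤ (f x)) (h0 : ∀ x, (∀ g : Q, g • x = x) → f x = 0) :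
    ∃ r, IsIntegral ℤ r ∧ ∑ x, f x = q * r := by
  classical
  have key : ∀ ω : MulAction.orbitRel.Quotient Q X, ∃ r, IsIntegral ℤ r ∧
      ∑ y : MulAction.orbit Q ω.out, f y = q * r := by
    intro ω
    have h1 : ∀ y : MulAction.orbit Q ω.out, f y = f ω.out := by
      rintro ⟨_, g, rfl⟩
      exact hf g _
    rw [Finset.sum_congr rfl fun y _ => h1 y, Finset.sum_const, Finset.card_univ,
      ← Nat.card_eq_fintype_card, nsmul_eq_mul]
    obtain ⟨n, hn⟩ := hQ.card_orbit ω.out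
    rcases n with _ | n
    · refine ⟨0, isIntegral_zero, ?_⟩
      rw [h0, mul_zero, mul_zero]
      intro g
      have := (Nat.card_eq_one_iff_unique.1 (hn.trans (pow_zero q))).1
      exact congrArg Subtype.val (Subsingleton.elim
        (⟨g • ω.out, g, rfl⟩ : MulAction.orbit Q ω.out) ⟨ω.out, MulAction.mem_orbit_self _⟩)
    · refine ⟨q ^ n * f ω.out, ?_, ?_⟩
      · exact ((isIntegral_natCast (R := ℤ) (B := ℂ) q).pow n).mul (hi _)
      · rw [hn]; push_cast; ring
  choose r hr hr' using key
  refine ⟨∑ ω, r ω, IsIntegral.sum _ fun ω _ => hr ω, ?_⟩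
  rw [← (MulAction.selfEquivSigmaOrbits Q X).symm.sum_comp, Fintype.sum_sigma, Finset.mul_sum]
  refine Finset.sum_congr rfl fun ω _ => ?_
  rw [← hr']
  rfl

theorem isIntegral_trace_of_finite {N W : Type} [Group N] [Finite N] [AddCommGroup W]
    [Module ℂ W] [FiniteDimensional ℂ W] (ρ : Representation ℂ N W) (n : N) :
    IsIntegral ℤ (LinearMap.trace ℂ W (ρ n)) := by
  rw [Module.End.trace_eq_sum_roots_charpoly_of_splits (IsAlgClosed.splits _)]
  apply IsIntegral.multiset_sum
  intro a ha
  have he : Module.End.HasEigenvalue (ρ n) a :=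
    (Module.End.hasEigenvalue_iff_isRoot_charpoly _ _).2 (Polynomial.isRoot_of_mem_roots ha)
  obtain ⟨v, hv⟩ := he.exists_hasEigenvector
  have h1 := hv.pow_apply (Nat.card N)
  rw [← map_pow, pow_card_eq_one', map_one, Module.End.one_apply] at h1
  have h2 : a ^ Nat.card N = 1 := by
    have : (a ^ Nat.card N - 1) • v = 0 := by rw [sub_smul, ← h1, one_smul, sub_self]
    have := (smul_eq_zero.1 this).resolve_right hv.2
    linear_combination this
  exact IsIntegral.of_pow Nat.card_pos (by rw [h2]; exact isIntegral_one)

/-- Let a `q`-group `Q` act on `N` with no fixed point except `1`, compatibly with conjugation in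
`G`, and let `N` have no nonzero fixed vector in `W`. Then `q` divides `dim W`: the traces of the
elements of `N` add up to `0`, and modulo `q` this sum is the trace `dim W` of the identity. -/
theorem prime_dvd_finrank {G N Q W : Type} [Group G] [Group N] [Finite N] [Group Q]
    [AddCommGroup W] [Module ℂ W] [FiniteDimensional ℂ W] (ρ : Representation ℂ G W)
    (j : N →* G) (k : Q →* G) (θ : Q →* MulAut N) {q : ℕ} [Fact q.Prime] (hQ : IsPGroup q Q)
    (hθ : ∀ g n, j (θ g n) = k g * j n * (k g)⁻¹)
    (hfix : ∀ n, (∀ g, θ g n = n) → n = 1)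
    (hW : ∀ w, (∀ n, ρ (j n) w = w) → w = 0) : q ∣ Module.finrank ℂ W := by
  classical
  have := Fintype.ofFinite N
  let _ : MulAction Q N := MulAction.compHom N θ
  let t : N → ℂ := fun n => LinearMap.trace ℂ W (ρ (j n))
  have ht : ∑ n, t n = 0 := by
    -- The image of `∑ n, ρ (j n)` consists of vectors fixed by `N`.
    have h0 : ∑ n, ρ (j n) = 0 := by
      ext w
      rw [LinearMap.zero_apply]
      apply hW
      intro m
      rw [LinearMap.sum_apply, map_sum]
      refine Fintype.sum_equiv (Equiv.mulLeft m) _ _ fun n => ?_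
      simp
    simp only [t]
    rw [← map_sum, h0, map_zero]
  -- Subtracting `dim W` at the only fixed point makes the orbit congruence applicable.
  let f : N → ℂ := fun n => t n - if n = 1 then (Module.finrank ℂ W : ℂ) else 0
  have hone : t 1 = Module.finrank ℂ W := by simp [t]
  have hfix1 : ∀ (g : Q) (n : N), θ g n = 1 ↔ n = 1 := fun g n => (θ g).map_eq_one_iff
  obtain ⟨r, hr, hr'⟩ := exists_sum_eq_mul_of_isPGroup hQ f (fun g n => by
      have h1 : t (θ g n) = t n := by
        simp only [t]
        rw [hθ, map_mul, LinearMap.trace_mul_comm, ← map_mul]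
        congr 2
        group
      change t (θ g n) - (if θ g n = 1 then _ else _) = _
      simp only [f, h1, hfix1]) (fun n => by
      refine (isIntegral_trace_of_finite (ρ.comp j) n).sub ?_
      split_ifs
      · exact isIntegral_natCast _
      · exact isIntegral_zero) (fun n hn => by
      have := hfix n hn
      subst this
      simp [f, hone])
  have h1 : -(Module.finrank ℂ W : ℂ) = q * r := by
    rw [← hr']
    simp [f, ht]
  have hq : (q : ℂ) ≠ 0 := Nat.cast_ne_zero.2 (Fact.out : q.Prime).ne_zero
  have h2 : r = algebraMap ℚ ℂ (-(Module.finrank ℂ W : ℚ) / q) := by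
    simp only [map_div₀, map_neg, map_natCast]
    field_simp
    linear_combination -h1
  -- The algebraic integer `r` is rational, hence an integer.
  rw [h2, isIntegral_algebraMap_iff (algebraMap ℚ ℂ).injective,
    IsIntegrallyClosed.isIntegral_iff] at hr
  obtain ⟨z, hz⟩ := hr
  have hq' : (q : ℚ) ≠ 0 := Nat.cast_ne_zero.2 (Fact.out : q.Prime).ne_zero
  have h3 : (Module.finrank ℂ W : ℤ) = q * (-z) := by
    have : (z : ℚ) = -(Module.finrank ℂ W : ℚ) / q := hz
    field_simp at this
    have h4 : ((Module.finrank ℂ W : ℤ) : ℚ) = ((q * (-z) : ℤ) : ℚ) := by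
      push_cast; linear_combination this
    exact_mod_cast h4
  exact Int.natCast_dvd_natCast.1 ⟨_, h3⟩

theorem not_isPrimePow_of_dvd {p q d : ℕ} (hp : p.Prime) (hq : q.Prime) (hpq : p ≠ q)
    (h1 : p ∣ d) (h2 : q ∣ d) : ¬ IsPrimePow d := by
  rw [isPrimePow_nat_iff]
  rintro ⟨l, k, hl, -, rfl⟩
  have a := (Nat.prime_dvd_prime_iff_eq hp hl).1 (hp.dvd_of_dvd_pow h1)
  have b := (Nat.prime_dvd_prime_iff_eq hq hl).1 (hq.dvd_of_dvd_pow h2)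
  exact hpq (a.trans b.symm)

/-- Extension step for degrees. In an irreducible representation of `N ⋊ H`, the fixed vectors of
`N` form an invariant subspace, so either `N` acts trivially and the representation comes from `H`,
or `N` has no nonzero fixed vector and both `p` and `q` divide the dimension. -/
theorem noPrimePowDegree_semidirect {N H : Type} [Group N] [Finite N] [Group H]
    (φ : H →* MulAut N) {p q : ℕ} (hp : p.Prime) (hq : q.Prime) (hpq : p ≠ q)
    (P Q : Subgroup H) (hP : IsPGroup p P) (hQ : IsPGroup q Q)
    (hPN : ∀ n, (∀ g ∈ P, φ g n = n) → n = 1) (hQN : ∀ n, (∀ g ∈ Q, φ g n = n) → n = 1)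
    (hH : NoPrimePowDegree H) : NoPrimePowDegree (N ⋊[φ] H) := by
  intro W _ _ _ ρ hρ
  have := Fact.mk hp
  have := Fact.mk hq
  let I : Submodule ℂ W := ⨅ n : N, LinearMap.ker (ρ (SemidirectProduct.inl n) - 1)
  have hI : ∀ w, w ∈ I ↔ ∀ n : N, ρ (SemidirectProduct.inl n) w = w := by
    intro w
    simp [I, Submodule.mem_iInf, sub_eq_zero]
  have hinv : ∀ g, ∀ x ∈ I, ρ g x ∈ I := by
    intro g x hx
    rw [hI] at hx ⊢
    intro n
    have h1 : SemidirectProduct.inl n * g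
        = g * SemidirectProduct.inl (φ g.right⁻¹ (g.left⁻¹ * n * g.left)) := by
      ext
      · simp [mul_assoc]
      · simp
    rw [← Module.End.mul_apply, ← map_mul, h1, map_mul, Module.End.mul_apply, hx]
  rcases hρ.2 I hinv with h | h
  · have hW : ∀ w, (∀ n : N, ρ (SemidirectProduct.inl n) w = w) → w = 0 := fun w hw => by
      rwa [← hI, h, Submodule.mem_bot] at hw
    refine not_isPrimePow_of_dvd hp hq hpq ?_ ?_
    · exact prime_dvd_finrank ρ SemidirectProduct.inl (SemidirectProduct.inr.comp P.subtype)
        (φ.comp P.subtype) hP (fun g n => by simp [SemidirectProduct.inl_aut])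
        (fun n hn => hPN n fun g hg => hn ⟨g, hg⟩) hW
    · exact prime_dvd_finrank ρ SemidirectProduct.inl (SemidirectProduct.inr.comp Q.subtype)
        (φ.comp Q.subtype) hQ (fun g n => by simp [SemidirectProduct.inl_aut])
        (fun n hn => hQN n fun g hg => hn ⟨g, hg⟩) hW
  · have htriv : ∀ (n : N) w, ρ (SemidirectProduct.inl n) w = w := fun n w =>
      (hI w).1 (h ▸ Submodule.mem_top) n
    refine hH W (ρ.comp SemidirectProduct.inr) ⟨hρ.1, fun U hU => hρ.2 U fun g x hx => ?_⟩
    rw [← SemidirectProduct.inl_left_mul_inr_right g, map_mul, Module.End.mul_apply, htriv]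
    exact hU _ x hx

/-- The central factor `C` acts by scalars, so restriction to `G` preserves irreducibility. -/
theorem noPrimePowDegree_prod {G C : Type} [Group G] [CommGroup C]
    (hG : NoPrimePowDegree G) : NoPrimePowDegree (G × C) := by
  intro W _ _ _ ρ hρ
  have := hρ.1
  refine hG W (ρ.comp (MonoidHom.inl G C)) ⟨hρ.1, fun U hU => hρ.2 U ?_⟩
  have hscal : ∀ c : C, ∃ a : ℂ, ∀ w, ρ (1, c) w = a • w := by
    intro c
    obtain ⟨a, ha⟩ := Module.End.exists_eigenvalue (ρ (1, c))
    refine ⟨a, fun w => ?_⟩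
    have h1 := hρ.2 (Module.End.eigenspace (ρ (1, c)) a) fun g x hx => by
      rw [Module.End.mem_eigenspace_iff] at hx ⊢
      rw [← Module.End.mul_apply, ← map_mul, show (1, c) * g = g * (1, c) by
        ext <;> simp [mul_comm], map_mul, Module.End.mul_apply, hx, map_smul]
    have h2 := h1.resolve_left ha
    exact Module.End.mem_eigenspace_iff.1 (h2 ▸ Submodule.mem_top)
  rintro ⟨g, c⟩ x hx
  obtain ⟨a, ha⟩ := hscal c
  rw [show (g, c) = (1, c) * (g, 1) by simp, map_mul, Module.End.mul_apply, ha]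
  exact U.smul_mem _ (hU g x hx)

theorem noPrimePowDegree_of_comm {C : Type} [CommGroup C] : NoPrimePowDegree C := by
  intro W _ _ _ ρ hρ
  have := hρ.1
  have : ρ.IsIrreducible :=
    { exists_pair_ne := ⟨⊥, ⊤, fun h => bot_ne_top (α := Submodule ℂ W)
        (congrArg Subrepresentation.toSubmodule h)⟩
      eq_bot_or_eq_top := fun U => (hρ.2 U.toSubmodule fun g x hx => U.apply_mem_toSubmodule g hx).imp
        (fun h => Subrepresentation.toSubmodule_injective h)
        (fun h => Subrepresentation.toSubmodule_injective h) }
  rw [Representation.IsIrreducible.finrank_eq_one_of_isMulCommutative ρ]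
  exact not_isPrimePow_one

/-! ### Fitting series -/

theorem lowerCentralSeries_mono {G : Type} [Group G] {A B : Subgroup G} (h : A ≤ B) (k : ℕ) :
    A.lowerCentralSeries k ≤ B.lowerCentralSeries k := by
  induction k with
  | zero => exact h
  | succ k ih => exact Subgroup.commutator_mono ih h

/-- `B/A` is nilpotent exactly when some term of the lower central series of `B` lies in `A`. -/
theorem isNilpotentQuot_iff {G : Type} [Group G] (A B : Subgroup G) [A.Normal] :
    IsNilpotentQuot A B ↔ ∃ k, B.lowerCentralSeries k ≤ A := by
  rw [IsNilpotentQuot, Subgroup.isNilpotent_iff_lowerCentralSeries]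
  refine exists_congr fun k => ?_
  rw [← Subgroup.map_lowerCentralSeries, Subgroup.map_eq_bot_iff, QuotientGroup.ker_mk']

theorem lowerCentralSeries_comap_le {G G' : Type} [Group G] [Group G'] (f : G' →* G) (B : Subgroup G) (k : ℕ) :
    (B.comap f).lowerCentralSeries k ≤ (B.lowerCentralSeries k).comap f := by
  rw [← Subgroup.map_le_iff_le_comap, Subgroup.map_lowerCentralSeries]
  exact lowerCentralSeries_mono (Subgroup.map_comap_le _ _) k

/-- If `X ≤ ⁅X, Y⁆` with `X, Y ≤ B`, then `X` lies in every term of the lower central series of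
`B`, hence dies in every nilpotent quotient of `B`. -/
theorem le_of_le_commutator {G : Type} [Group G] {A B X Y : Subgroup G} [A.Normal]
    (h : IsNilpotentQuot A B) (hX : X ≤ B) (hY : Y ≤ B) (hXY : X ≤ ⁅X, Y⁆) : X ≤ A := by
  obtain ⟨k, hk⟩ := (isNilpotentQuot_iff A B).1 h
  refine le_trans ?_ hk
  clear hk
  induction k with
  | zero => exact hX
  | succ k ih => exact hXY.trans (Subgroup.commutator_mono ih hY)

/-- A chain of subgroups `C 0, …, C m` with `C (k + 1) ≤ ⁅C (k + 1), C k⁆` and `C m` nontrivial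
forces Fitting height at least `m + 1`: going down a Fitting series, each step costs at most one
term of the chain. -/
theorem le_length_of_chain {G : Type} [Group G] {m ℓ : ℕ} {C F : ℕ → Subgroup G}
    (hC : ∀ k < m, C (k + 1) ≤ ⁅C (k + 1), C k⁆) (hm : C m ≠ ⊥) (hF : IsFittingSeries F ℓ) :
    m + 1 ≤ ℓ := by
  obtain ⟨h0, h1, hn, -, hq⟩ := hF
  by_contra! hlt
  have key : ∀ j ≤ ℓ, ∀ i, j ≤ i → i ≤ m → C i ≤ F (ℓ - j) := by
    intro j
    induction j with
    | zero => intro _ i _ _; simp [h1]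
    | succ j ih =>
      intro hj i hji him
      obtain ⟨i, rfl⟩ : ∃ i', i = i' + 1 := ⟨i - 1, by omega⟩
      have hs : ℓ - (j + 1) + 1 = ℓ - j := by omega
      have := hn (ℓ - (j + 1))
      have h2 := hq (ℓ - (j + 1)) (by omega) this
      rw [hs] at h2
      exact le_of_le_commutator h2 (ih (by omega) _ (by omega) him)
        (ih (by omega) i (by omega) (by omega)) (hC i (by omega))
  have := key ℓ le_rfl m (by omega) le_rfl
  rw [Nat.sub_self, h0, le_bot_iff] at this
  exact hm this

/-- If `π : G' → G` has kernel `K`, and `N ≤ K` is an abelian normal subgroup with `⁅K, G'⁆ ≤ N`, then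
a Fitting series of `G` yields one of `G'` that is longer by one: the part of `K` outside `N` is
central modulo `N`, so it is absorbed into the second term. -/
theorem isFittingSeries_extend {G G' : Type} [Group G] [Group G'] (π : G' →* G) (N : Subgroup G')
    [N.Normal] (hN : ⁅N, N⁆ = ⊥) (hle : N ≤ π.ker) (hc : ⁅π.ker, (⊤ : Subgroup G')⁆ ≤ N)
    {m : ℕ} {F : ℕ → Subgroup G} (hF : IsFittingSeries F (m + 1)) :
    ∃ F' : ℕ → Subgroup G', IsFittingSeries F' (m + 2) := by
  obtain ⟨h0, h1, hn, hmono, hq⟩ := hF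
  have hqq : ∀ j, j < m + 1 → ∃ k, (F (j + 1)).lowerCentralSeries k ≤ F j := fun j hj => by
    have := hn j
    exact (isNilpotentQuot_iff _ _).1 (hq j hj this)
  refine ⟨fun j => match j with
    | 0 => ⊥
    | 1 => N
    | j + 2 => (F (j + 1)).comap π, rfl, by simp [h1], ?_, ?_, ?_⟩
  · rintro (_ | _ | j)
    · exact inferInstanceAs (⊥ : Subgroup G').Normal
    · assumption
    · exact (hn (j + 1)).comap π
  · rintro (_ | _ | j) hj
    · exact bot_le
    · exact hle.trans (Subgroup.ker_le_comap _ _)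
    · exact Subgroup.comap_mono (hmono (j + 1) (by omega))
  · rintro (_ | _ | j) hj hi
    · exact (isNilpotentQuot_iff _ _).2 ⟨1, hN.le⟩
    · obtain ⟨k, hk⟩ := hqq 0 (by omega)
      refine (isNilpotentQuot_iff _ _).2 ⟨k + 1, ?_⟩
      refine (Subgroup.commutator_mono ?_ le_top).trans hc
      refine (lowerCentralSeries_comap_le _ _ _).trans ?_
      rw [h0] at hk
      exact Subgroup.comap_mono hk
    · obtain ⟨k, hk⟩ := hqq (j + 1) (by omega)
      exact (isNilpotentQuot_iff _ _).2
        ⟨k, (lowerCentralSeries_comap_le _ _ _).trans (Subgroup.comap_mono hk)⟩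

/-! ### The module of functions with trivial coset products -/

theorem eq_one_of_pow_eq_one {A : Type} [Group A] {s m : ℕ} (hA : IsPGroup s A)
    (hsm : s.Coprime m) {a : A} (h : a ^ m = 1) : a = 1 := by
  rw [← orderOf_eq_one_iff]
  exact Nat.eq_one_of_dvd_coprimes (hA.orderOf_coprime hsm a) dvd_rfl (orderOf_dvd_of_pow_eq_one h)

/-- The functions `G → A` whose product over every coset `V x` is `1`. For normal `V` and `|V|`
prime to `|A|` this is the part `[A^G, V]` of the regular module on which `V` has no fixed points. -/
def cosetProdKer {G : Type} [Group G] (V : Subgroup G) [Fintype V] (A : Type) [CommGroup A] :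
    Subgroup (G → A) where
  carrier := {f | ∀ x, ∏ v : V, f (v * x) = 1}
  one_mem' := fun x => by simp
  mul_mem' := fun {f f'} hf hf' x => by simp [Finset.prod_mul_distrib, hf x, hf' x]
  inv_mem' := fun {f} hf x => by simp [Finset.prod_inv_distrib, hf x]

section

variable {G : Type} [Group G] {V : Subgroup G} [Fintype V] {A : Type} [CommGroup A]

/-- `G` acts on functions by left translation and the sign `-1` acts by inversion of values. -/
abbrev twistAction [V.Normal] : MulDistribMulAction (G × ℤˣ) (cosetProdKer V A) where
  smul h f := ⟨fun x => f.1 (h.1⁻¹ * x) ^ (h.2 : ℤ), fun x => by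
    rw [Finset.prod_zpow, ← one_zpow (h.2 : ℤ)]
    congr 1
    rw [← f.2 (h.1⁻¹ * x)]
    refine Fintype.prod_equiv (MulAut.conjNormal h.1⁻¹).toEquiv _ _ fun v => ?_
    simp [mul_assoc]⟩
  one_smul f := by
    apply Subtype.ext
    funext x
    change f.1 ((1 : G)⁻¹ * x) ^ (((1 : ℤˣ) : ℤ)) = f.1 x
    simp
  mul_smul h h' f := by
    apply Subtype.ext
    funext x
    change f.1 ((h.1 * h'.1)⁻¹ * x) ^ (((h.2 * h'.2 : ℤˣ) : ℤ))
      = (f.1 (h'.1⁻¹ * (h.1⁻¹ * x)) ^ (h'.2 : ℤ)) ^ (h.2 : ℤ)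
    rw [← zpow_mul, mul_inv_rev, mul_assoc, Units.val_mul, mul_comm (h.2 : ℤ)]
  smul_mul h f f' := by
    apply Subtype.ext
    funext x
    exact mul_zpow _ _ _
  smul_one h := by
    apply Subtype.ext
    funext x
    exact one_zpow _

/-- The action `twistAction` as a homomorphism to the automorphism group. -/
def twistHom (V : Subgroup G) [Fintype V] (A : Type) [CommGroup A] [V.Normal] :
    G × ℤˣ →* MulAut (cosetProdKer V A) :=
  let _ := twistAction (V := V) (A := A)
  MulDistribMulAction.toMulAut (G × ℤˣ) (cosetProdKer V A)

theorem twistHom_apply [V.Normal] (h : G × ℤˣ) (f : cosetProdKer V A) (x : G) :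
    (twistHom V A h f).1 x = f.1 (h.1⁻¹ * x) ^ (h.2 : ℤ) := rfl

/-- The norm of `V` vanishes on `cosetProdKer V A`. This carries both the absence of fixed points of
`V` and the identity `[N, V] = N`. -/
theorem prod_twistHom [V.Normal] (f : cosetProdKer V A) :
    ∏ v : V, twistHom V A ((v : G), 1) f = 1 := by
  apply Subtype.ext
  funext x
  rw [Subgroup.val_finsetProd, Finset.prod_apply]
  simp only [twistHom_apply, Units.val_one, zpow_one]
  rw [OneMemClass.coe_one, Pi.one_apply, ← f.2 x]
  exact Fintype.prod_equiv (Equiv.inv V) _ _ fun v => by simp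

theorem cosetProdKer_nontrivial [Nontrivial A] (hV : V ≠ ⊥) : Nontrivial (cosetProdKer V A) := by
  classical
  obtain ⟨v₀, hv₀⟩ := Subgroup.ne_bot_iff_exists_ne_one.1 hV
  obtain ⟨a, ha⟩ := exists_ne (1 : A)
  have h1 : ((v₀ : G) : G) ≠ 1 := fun h => hv₀ (Subtype.ext h)
  -- Both point masses lie over the trivial coset `V`, so their quotient has trivial coset products.
  let f : G → A := Pi.mulSingle 1 a * (Pi.mulSingle (v₀ : G) a)⁻¹
  have hf : f ∈ cosetProdKer V A := by
    intro x
    simp only [f, Pi.mul_apply, Pi.inv_apply, Finset.prod_mul_distrib, Finset.prod_inv_distrib]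
    rw [mul_inv_eq_one]
    refine Fintype.prod_equiv (Equiv.mulLeft v₀) _ _ fun v => ?_
    simp [Pi.mulSingle_apply, mul_assoc]
  refine ⟨⟨f, hf⟩, 1, fun h => ha ?_⟩
  have h2 := congrFun (congrArg Subtype.val h) 1
  simpa [f, Pi.mulSingle_apply, h1.symm] using h2

theorem isPGroup_cosetProdKer [Finite A] {s : ℕ} [Fact s.Prime] (hA : IsPGroup s A) :
    IsPGroup s (cosetProdKer V A) := by
  obtain ⟨k, hk⟩ := IsPGroup.iff_card.1 hA
  refine fun f => ⟨k, ?_⟩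
  apply Subtype.ext
  funext x
  change f.1 x ^ s ^ k = 1
  rw [← hk, pow_card_eq_one']


theorem eq_one_of_forall_twistHom_eq [V.Normal] {s : ℕ} (hA : IsPGroup s A)
    (hs : s.Coprime (Nat.card V)) (f : cosetProdKer V A)
    (h : ∀ v ∈ V, twistHom V A (v, 1) f = f) : f = 1 := by
  have h1 := prod_twistHom f
  rw [Fintype.prod_congr _ (fun _ : V => f) fun v : V => h v v.2, Finset.prod_const, Finset.card_univ,
    ← Nat.card_eq_fintype_card] at h1
  apply Subtype.ext
  funext x
  exact eq_one_of_pow_eq_one hA hs (congrFun (congrArg Subtype.val h1) x)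

theorem eq_one_of_twistHom_neg_eq [V.Normal] {s : ℕ} (hA : IsPGroup s A)
    (hs : s.Coprime 2) (f : cosetProdKer V A)
    (h : twistHom V A (1, -1) f = f) : f = 1 := by
  apply Subtype.ext
  funext x
  have h1 := congrFun (congrArg Subtype.val h) x
  rw [twistHom_apply] at h1
  refine eq_one_of_pow_eq_one hA hs (a := f.1 x) ?_
  have h2 : (f.1 x)⁻¹ = f.1 x := by simpa using h1
  rw [pow_two]
  nth_rw 1 [← h2]
  exact inv_mul_cancel _

open scoped commutatorElement in
/-- The equality `[N, V] = N` inside `N ⋊ (G × ℤˣ)`, for `N = cosetProdKer V A`: since the norm of `V`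
vanishes, `h ^ |V|` is the product over `v ∈ V` of the commutators `⁅h, v⁆`, and `|V|`-th powers
exhaust `N`. -/
theorem range_inl_le_commutator [V.Normal] {s : ℕ} (hN : IsPGroup s (cosetProdKer V A))
    (hs : s.Coprime (Nat.card V)) :
    (SemidirectProduct.inl : cosetProdKer V A →* _ ⋊[twistHom V A] (G × ℤˣ)).range ≤
      ⁅(SemidirectProduct.inl : cosetProdKer V A →* _ ⋊[twistHom V A] (G × ℤˣ)).range,
        V.map (SemidirectProduct.inr.comp (MonoidHom.inl G ℤˣ))⁆ := by
  rintro _ ⟨f, rfl⟩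
  obtain ⟨h, rfl⟩ := (hN.powEquiv hs).surjective f
  rw [IsPGroup.powEquiv_apply]
  have h1 : h ^ Nat.card V = ∏ v : V, h * (twistHom V A ((v : G), 1) h)⁻¹ := by
    rw [Finset.prod_mul_distrib, Finset.prod_inv_distrib, prod_twistHom, inv_one, mul_one,
      Finset.prod_const, Finset.card_univ, ← Nat.card_eq_fintype_card]
  rw [← Subgroup.mem_comap, h1]
  refine Subgroup.prod_mem _ fun v _ => ?_
  rw [Subgroup.mem_comap]
  have h2 : SemidirectProduct.inl (h * (twistHom V A ((v : G), 1) h)⁻¹) =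
      ⁅(SemidirectProduct.inl h : cosetProdKer V A ⋊[twistHom V A] (G × ℤˣ)),
        (SemidirectProduct.inr ((v : G), (1 : ℤˣ)) : cosetProdKer V A ⋊[twistHom V A] (G × ℤˣ))⁆ := by
    rw [commutatorElement_def, map_mul, map_inv, SemidirectProduct.inl_aut, mul_inv_rev,
      mul_inv_rev, ← map_inv SemidirectProduct.inr, inv_inv]
    simp [mul_assoc]
  rw [h2]
  exact Subgroup.commutator_mem_commutator ⟨h, rfl⟩ ⟨v, v.2, rfl⟩

end

/-! ### The tower of groups -/

/-- The induction hypothesis of the construction. Besides the properties asked for in the theorem,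
`G` carries a nontrivial normal `p`-subgroup `V`, on which the next module is built, and a chain of
`m + 1` subgroups ending in `V` that bounds the Fitting height from below. -/
structure IsTowerStage (m p : ℕ) (G : Type) [Group G] (V : Subgroup G) : Prop where
  finite : Finite G
  solvable : Group.IsSolvable G
  primeFactors : (Nat.card G).primeFactors ⊆ ({3, 5, 2} : Finset ℕ)
  degrees : NoPrimePowDegree G
  normal : V.Normal
  isPGroup : IsPGroup p V
  exists_series : ∃ F : ℕ → Subgroup G, IsFittingSeries F (m + 1)
  ne_bot : V ≠ ⊥
  exists_chain : ∃ C : ℕ → Subgroup G, C m = V ∧ ∀ k < m, C (k + 1) ≤ ⁅C (k + 1), C k⁆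

theorem isTowerStage_base :
    IsTowerStage 0 3 (Multiplicative (ZMod 3)) ⊤ where
  finite := inferInstance
  solvable := inferInstance
  primeFactors := by
    have : Nat.card (Multiplicative (ZMod 3)) = 3 := by simp
    rw [this, Nat.Prime.primeFactors Nat.prime_three]
    decide
  degrees := noPrimePowDegree_of_comm
  normal := inferInstance
  isPGroup := IsPGroup.of_card (n := 1) (by simp)
  exists_series := by
    refine ⟨fun j => if j = 0 then ⊥ else ⊤, by simp, by simp, fun j => inferInstance, ?_, ?_⟩
    · intro j _
      simp
    · intro j hj hi
      obtain rfl : j = 0 := by omega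
      refine (isNilpotentQuot_iff _ _).2 ⟨1, ?_⟩
      rw [Subgroup.lowerCentralSeries_succ]
      simp [Subgroup.commutator_eq_bot_iff_le_centralizer, CommGroup.center_eq_top]
  ne_bot := top_ne_bot
  exists_chain := ⟨fun _ => ⊤, rfl, by simp⟩

theorem IsTowerStage.step {m p s : ℕ} {G : Type} [Group G] {V : Subgroup G}
    (h : IsTowerStage m p G V) (hp : p.Prime) (hs : s.Prime) (hps : p ≠ s) (hp2 : p ≠ 2)
    (hs2 : s ≠ 2) (hsmem : s ∈ ({3, 5, 2} : Finset ℕ)) :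
    ∃ (G' : Type) (_ : Group G') (V' : Subgroup G'), IsTowerStage (m + 1) s G' V' := by
  have := h.finite
  have := h.normal
  have := h.solvable
  have := Fact.mk hp
  have := Fact.mk hs
  have := Fintype.ofFinite V
  obtain ⟨F, hF⟩ := h.exists_series
  obtain ⟨C, hCm, hC⟩ := h.exists_chain
  let A := Multiplicative (ZMod s)
  have hA : IsPGroup s A := IsPGroup.of_card (n := 1) (by simp [A])
  have hN : IsPGroup s (cosetProdKer V A) := isPGroup_cosetProdKer hA
  have := cosetProdKer_nontrivial (A := A) h.ne_bot
  obtain ⟨a, ha⟩ := IsPGroup.iff_card.1 h.isPGroup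
  obtain ⟨b, hb⟩ := IsPGroup.iff_card.1 hN
  have hsV : s.Coprime (Nat.card V) := by
    rw [ha]
    exact ((Nat.coprime_primes hs hp).2 hps.symm).pow_right a
  have hs2' : s.Coprime 2 := (Nat.coprime_primes hs Nat.prime_two).2 hs2
  let G' := cosetProdKer V A ⋊[twistHom V A] (G × ℤˣ)
  let ι : cosetProdKer V A →* G' := SemidirectProduct.inl
  let κ : G →* G' := SemidirectProduct.inr.comp (MonoidHom.inl G ℤˣ)
  have hι : ι.range = (SemidirectProduct.rightHom : G' →* G × ℤˣ).ker :=
    SemidirectProduct.range_inl_eq_ker_rightHom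
  have hnorm : ι.range.Normal := hι ▸ MonoidHom.normal_ker _
  refine ⟨G', inferInstance, ι.range, ?_, ?_, ?_, ?_, hnorm, ?_, ?_, ?_, ?_⟩
  · exact Finite.of_equiv _ SemidirectProduct.equivProd.symm
  · exact Group.isSolvable_of_ker_le_range ι SemidirectProduct.rightHom hι.ge
  · rw [SemidirectProduct.card, Nat.card_prod, hb, Nat.card_eq_fintype_card (α := ℤˣ),
      Fintype.card_units_int]
    intro q hq
    obtain ⟨hq, hd, -⟩ := Nat.mem_primeFactors.1 hq
    rcases hq.dvd_mul.1 hd with hd | hd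
    · rw [(Nat.prime_dvd_prime_iff_eq hq hs).1 (hq.dvd_of_dvd_pow hd)]
      exact hsmem
    · rcases hq.dvd_mul.1 hd with hd | hd
      · exact h.primeFactors (Nat.mem_primeFactors.2 ⟨hq, hd, Nat.card_pos.ne'⟩)
      · rw [(Nat.prime_dvd_prime_iff_eq hq Nat.prime_two).1 hd]
        simp
  · refine noPrimePowDegree_semidirect _ hp Nat.prime_two hp2 (V.map (MonoidHom.inl G ℤˣ))
      ((⊤ : Subgroup ℤˣ).map (MonoidHom.inr G ℤˣ)) (h.isPGroup.map _)
      (IsPGroup.map (IsPGroup.of_card (n := 1) ?_) _) ?_ ?_ (noPrimePowDegree_prod h.degrees)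
    · rw [Subgroup.card_top, Nat.card_eq_fintype_card, Fintype.card_units_int, pow_one]
    · exact fun f hf => eq_one_of_forall_twistHom_eq hA hsV f fun v hv => hf _ ⟨v, hv, rfl⟩
    · exact fun f hf => eq_one_of_twistHom_neg_eq hA hs2' f (hf _ ⟨-1, Subgroup.mem_top _, rfl⟩)
  · exact hN.of_surjective ι.rangeRestrict ι.rangeRestrict_surjective
  · refine isFittingSeries_extend ((MonoidHom.fst G ℤˣ).comp SemidirectProduct.rightHom)
      ι.range ?_ ?_ ?_ hF
    · rw [MonoidHom.range_eq_map, ← Subgroup.map_commutator,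
        (Subgroup.commutator_eq_bot_iff_le_centralizer).2 (by simp [CommGroup.center_eq_top]),
        Subgroup.map_bot]
    · rw [hι, ← MonoidHom.comap_ker]
      exact Subgroup.ker_le_comap _ _
    · rw [hι, Subgroup.commutator_le]
      intro x hx y _
      rw [MonoidHom.mem_ker] at hx ⊢
      rw [map_commutatorElement]
      have hx1 : x.right.1 = 1 := hx
      rw [commutatorElement_eq_one_iff_mul_comm]
      ext
      · simp [hx1]
      · simp [mul_comm]
  · rw [Ne, MonoidHom.range_eq_bot_iff]
    intro h1
    obtain ⟨f, hf⟩ := exists_ne (1 : cosetProdKer V A)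
    exact hf (SemidirectProduct.inl_injective ((DFunLike.congr_fun h1 f).trans (map_one ι).symm))
  · refine ⟨fun k => if k ≤ m then (C k).map κ else ι.range, by simp, fun k hk => ?_⟩
    rcases Nat.lt_succ_iff_lt_or_eq.1 hk with hk | rfl
    · simp only [hk.le, Nat.succ_le_of_lt hk, if_true]
      rw [← Subgroup.map_commutator]
      exact Subgroup.map_mono (hC k hk)
    · simp only [le_refl, if_true, Nat.not_succ_le_self, if_false, hCm]
      exact range_inl_le_commutator hN hsV

theorem exists_isTowerStage (m : ℕ) : ∃ p, (p = 3 ∨ p = 5) ∧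
    ∃ (G : Type) (_ : Group G) (V : Subgroup G), IsTowerStage m p G V := by
  induction m with
  | zero => exact ⟨3, Or.inl rfl, _, _, _, isTowerStage_base⟩
  | succ m ih =>
    obtain ⟨p, rfl | rfl, G, _, V, h⟩ := ih
    · exact ⟨5, Or.inr rfl, h.step Nat.prime_three Nat.prime_five (by decide) (by decide)
        (by decide) (by decide)⟩
    · exact ⟨3, Or.inl rfl, h.step Nat.prime_five Nat.prime_three (by decide) (by decide)
        (by decide) (by decide)⟩

theorem NoPrimePowDegree.isCDG {G : Type} [Group G] (h : NoPrimePowDegree G) : IsCDG G := by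
  rintro d ⟨V, _, rfl⟩ hd
  exact absurd hd (h V V.ρ (isIrr_of_simple V))

/-- **Theorem (Statement 12).** There are three distinct primes `p₁, p₂, r` such that for each
`i ≥ 1` there is a finite solvable `{p₁, p₂, r}`-group that is a CDG with Fitting height
`i + 1`. -/
theorem exists_three_primes_CDG_family :
    ∃ p₁ p₂ r : ℕ, p₁.Prime ∧ p₂.Prime ∧ r.Prime ∧ p₁ ≠ p₂ ∧ p₁ ≠ r ∧ p₂ ≠ r ∧
      ∀ i : ℕ, 1 ≤ i →
        ∃ (G : Type) (_ : Group G) (_ : Finite G),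
          IsSolvable G ∧ (Nat.card G).primeFactors ⊆ ({p₁, p₂, r} : Finset ℕ) ∧
          IsCDG G ∧ FittingHeightIs G (i + 1) := by
  refine ⟨3, 5, 2, Nat.prime_three, Nat.prime_five, Nat.prime_two, by decide, by decide, by decide,
    fun i _ => ?_⟩
  obtain ⟨p, -, G, _, V, h⟩ := exists_isTowerStage i
  obtain ⟨C, hCm, hC⟩ := h.exists_chain
  exact ⟨G, inferInstance, h.finite, h.solvable, h.primeFactors, h.degrees.isCDG,
    h.exists_series, fun m ⟨F, hF⟩ => le_length_of_chain hC (hCm ▸ h.ne_bot) hF⟩
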